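/- Let S ⊆ ℝⁿ be a nonempty closed κ-porous set and let 𝒲_S be a Whitney decomposition of ℝⁿ ∖ S. Then for every x ∈ S and every i ∈ ℕ there exists Q ∈ 𝒲_S such that 2^{−(i+1)}/(5κ) ≤ diam(Q) ≤ 2^{−(i+1)} and Q ⊆ Q(x, 2^{−i}). -/

import Mathlib

open MeasureTheory Metric Set Filter
open scoped ENNReal NNReal Topology

noncomputable section

/-- ℝⁿ, with the sup-norm (given by the product metric on `Fin n → ℝ`). -/
abbrev Rn (n : ℕ) := Fin n → ℝ

/-- `S` is `κ`-porous. -/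
def IsPorous {n : ℕ} (κ : ℝ) (S : Set (Rn n)) : Prop :=
  1 ≤ κ ∧ ∀ (x : Rn n) (r : ℝ), 0 < r → r ≤ 1 →
    ∃ y ∈ closedBall x r, closedBall y (r / κ) ∩ S = ∅

/-- The closed dyadic cube `2^{−j}(m + [0,1]ⁿ)`. Its sup-norm diameter is `2^{−j}`. -/
def dyadicCube {n : ℕ} (j : ℤ) (m : Fin n → ℤ) : Set (Rn n) :=
  {y | ∀ i, (m i : ℝ) * 2 ^ (-j) ≤ y i ∧ y i ≤ ((m i : ℝ) + 1) * 2 ^ (-j)}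

/-- `W` (a family of dyadic cubes, indexed by `(j,m)` with side `2^{−j}`) is
a Whitney decomposition of `ℝⁿ ∖ S`: the cubes have pairwise disjoint interiors, their
union is `ℝⁿ ∖ S`, and `diam(Q) ≤ dist(Q,S) ≤ 4 diam(Q)` in the sup-norm (recall
`dist(Q,S) = inf_{p∈Q} dist(p,S)` and that the sup-norm diameter of `Q` is `2^{−j}`). -/
def IsWhitney {n : ℕ} (S : Set (Rn n)) (W : Set (ℤ × (Fin n → ℤ))) : Prop :=
  (∀ Q ∈ W, ∀ Q' ∈ W, Q ≠ Q' →
      interior (dyadicCube Q.1 Q.2) ∩ interior (dyadicCube Q'.1 Q'.2) = ∅) ∧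
  (⋃ Q ∈ W, dyadicCube Q.1 Q.2) = Sᶜ ∧
  (∀ Q ∈ W, (∀ x ∈ dyadicCube Q.1 Q.2, (2:ℝ) ^ (-Q.1) ≤ infDist x S) ∧
      (∃ x ∈ dyadicCube Q.1 Q.2, infDist x S ≤ 4 * (2:ℝ) ^ (-Q.1)))

theorem dyadic_dist_le {n : ℕ} (j : ℤ) (m : Fin n → ℤ) {y z : Rn n}
    (hy : y ∈ dyadicCube j m) (hz : z ∈ dyadicCube j m) : dist y z ≤ (2:ℝ) ^ (-j) := by
  rw [dist_pi_le_iff (by positivity)]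
  intro k
  obtain ⟨a, b⟩ := hy k
  obtain ⟨c, d⟩ := hz k
  rw [Real.dist_eq, abs_le]
  constructor <;> linarith

/-- **Whitney cubes near porous sets** (Lemma 2.11). If `S ⊆ ℝⁿ` is a nonempty closed
`κ`-porous set with Whitney decomposition `𝒲_S`, then for every `x ∈ S` and `i ∈ ℕ`
there is `Q ∈ 𝒲_S` with `2^{−(i+1)}/(5κ) ≤ diam(Q) ≤ 2^{−(i+1)}` and
`Q ⊆ Q(x, 2^{−i})`. -/
theorem whitney_cube_near_porous {n : ℕ} (S : Set (Rn n)) (hne : S.Nonempty)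
    (hcl : IsClosed S) (κ : ℝ) (hpor : IsPorous κ S)
    (W : Set (ℤ × (Fin n → ℤ))) (hW : IsWhitney S W) :
    ∀ x ∈ S, ∀ i : ℕ, ∃ Q ∈ W,
      (2:ℝ) ^ (-(i:ℤ) - 1) / (5 * κ) ≤ (2:ℝ) ^ (-Q.1) ∧
      (2:ℝ) ^ (-Q.1) ≤ (2:ℝ) ^ (-(i:ℤ) - 1) ∧
      dyadicCube Q.1 Q.2 ⊆ closedBall x ((2:ℝ) ^ (-(i:ℤ))) := by
  intro x hx i
  obtain ⟨hκ, hp⟩ := hpor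
  obtain ⟨-, hU, hQ⟩ := hW
  have h2 : (2:ℝ) ^ (-(i:ℤ)) = 2 * (2:ℝ) ^ (-(i:ℤ) - 1) := by
    rw [zpow_sub_one₀ (by norm_num)]; ring
  have hr1 : (2:ℝ) ^ (-(i:ℤ) - 1) ≤ 1 :=
    zpow_le_one_of_nonpos₀ (by norm_num) (by omega)
  have hr0 : 0 < (2:ℝ) ^ (-(i:ℤ) - 1) := by positivity
  rw [h2]
  generalize (2:ℝ) ^ (-(i:ℤ) - 1) = r at *
  have hκ0 : 0 < κ := by linarith
  obtain ⟨y, hy, hyS⟩ := hp x r hr0 hr1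
  have hyx : dist y x ≤ r := hy
  have hyn : y ∈ Sᶜ := fun h => by
    have : y ∈ closedBall y (r / κ) ∩ S := ⟨mem_closedBall_self (by positivity), h⟩
    rw [hyS] at this
    exact this
  rw [← hU] at hyn
  simp only [mem_iUnion] at hyn
  obtain ⟨Q, hQW, hyQ⟩ := hyn
  obtain ⟨hlo, p, hpQ, hpd⟩ := hQ Q hQW
  have h3 : (2:ℝ) ^ (-Q.1) ≤ r := (hlo y hyQ).trans ((infDist_le_dist_of_mem hx).trans hyx)
  have h4 : r / κ ≤ infDist y S := by
    rw [le_infDist hne]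
    intro s hs
    by_contra hc
    have : s ∈ closedBall y (r / κ) ∩ S := ⟨by rw [mem_closedBall']; linarith, hs⟩
    rw [hyS] at this
    exact this
  have h5 : infDist y S ≤ infDist p S + dist y p := infDist_le_infDist_add_dist
  have h6 := dyadic_dist_le Q.1 Q.2 hyQ hpQ
  refine ⟨Q, hQW, ?_, h3, ?_⟩
  · rw [mul_comm, ← div_div, div_le_iff₀ (by norm_num)]
    linarith
  · intro z hz
    have h7 := dyadic_dist_le Q.1 Q.2 hz hyQ
    have h8 := dist_triangle z y x
    rw [mem_closedBall]
    linarith
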